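/- Let m be a natural number, X a metric space, λ a real number with 0 < λ < 1, and ε > 0. Let φ : X → X be a bijective similarity of ratio λ. Let e be a map from the open ball B(0, ε) of the Euclidean space ℝ^m to X such that: dist(e x, e y) = ‖x − y‖ for all x, y with ‖x‖ < ε and ‖y‖ < ε; the image of e equals the open metric ball of radius ε centered at q := e(0) in X; and φ(e x) = e(λ • x) whenever ‖x‖ < ε. Then there exists a surjective isometry Φ : ℝ^m → X which agrees with e on B(0, ε); in particular, X is isometric to the Euclidean space ℝ^m. -/

import Mathlib

/-!
The extension is `Φ = φ⁻ⁿ ∘ e ∘ ψⁿ`, where `ψ` is the contraction on the source and `n` is so large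
that `ψⁿ y` lies in the domain of `e`; the equivariance `φ ∘ e = e ∘ ψ` makes the value independent
of `n`. Then `Φ` intertwines `ψ` and `φ`. Since `ψⁿ` and `φⁿ` both scale distances by `cⁿ` and move
any finite set of points close to the fixed points, `Φ` is isometric and surjective because it is so
there.
-/

open Filter Function Metric Set Topology

/-- The map `f` is a similarity of ratio `c`. The ratio is explicit data, unlike `Dilation.ratio`,
whose value is `1` whenever all distances in the source are zero. -/
def IsSimilarity {X Y : Type*} [PseudoMetricSpace X] [PseudoMetricSpace Y] (c : ℝ) (f : X → Y) :
    Prop :=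
  ∀ x y, dist (f x) (f y) = c * dist x y

namespace IsSimilarity

lemma injective {X Y : Type*} [MetricSpace X] [PseudoMetricSpace Y] {c : ℝ} {f : X → Y}
    (hf : IsSimilarity c f) (hc : c ≠ 0) : Injective f := by
  intro x y hxy
  have hdist : c * dist x y = 0 := by rw [← hf, hxy, dist_self]
  exact dist_eq_zero.1 ((mul_eq_zero.1 hdist).resolve_left hc)

section SelfMap

variable {X : Type*} [PseudoMetricSpace X] {c : ℝ} {f : X → X} {p : X}

lemma iterate (hf : IsSimilarity c f) (n : ℕ) : IsSimilarity (c ^ n) f^[n] := by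
  intro x y
  induction n with
  | zero => simp
  | succ n ih => rw [iterate_succ_apply', iterate_succ_apply', hf, ih, pow_succ', mul_assoc]

lemma mapsTo_ball (hf : IsSimilarity c f) (hc : c ≤ 1) (hp : IsFixedPt f p) (r : ℝ) :
    MapsTo f (ball p r) (ball p r) := fun x hx ↦
  calc dist (f x) p = c * dist x p := by rw [← hf, hp.eq]
    _ ≤ dist x p := mul_le_of_le_one_left dist_nonneg hc
    _ < r := hx

lemma tendsto_iterate (hf : IsSimilarity c f) (hc0 : 0 ≤ c) (hc1 : c < 1) (hp : IsFixedPt f p)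
    (x : X) : Tendsto (fun n ↦ f^[n] x) atTop (𝓝 p) := by
  have hdist (n : ℕ) : dist (f^[n] x) p = c ^ n * dist x p := by
    rw [← hf.iterate n, (hp.iterate n).eq]
  rw [tendsto_iff_dist_tendsto_zero]
  simpa only [hdist, zero_mul] using
    (tendsto_pow_atTop_nhds_zero_of_lt_one hc0 hc1).mul_const (dist x p)

end SelfMap

end IsSimilarity

section Semiconj

variable {X Y : Type*} {φ : X → X} {ψ : Y → Y}

lemma iterate_apply_eq_of_semiconj_on {e : Y → X} {s : Set Y} (hs : MapsTo ψ s s)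
    (he : ∀ y ∈ s, φ (e y) = e (ψ y)) (n : ℕ) {y : Y} (hy : y ∈ s) :
    φ^[n] (e y) = e (ψ^[n] y) := by
  induction n with
  | zero => rfl
  | succ n ih => rw [iterate_succ_apply', iterate_succ_apply', ih, he _ (hs.iterate n hy)]

lemma exists_forall_iterate_eq_of_semiconj_on {e : Y → X} {s : Set Y} (hφ : Bijective φ)
    (hs : MapsTo ψ s s) (he : ∀ y ∈ s, φ (e y) = e (ψ y)) {y : Y} (hy : ∃ n, ψ^[n] y ∈ s) :
    ∃ x, ∀ n, ψ^[n] y ∈ s → φ^[n] x = e (ψ^[n] y) := by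
  obtain ⟨N, hN⟩ := hy
  obtain ⟨x, hx⟩ := hφ.surjective.iterate N (e (ψ^[N] y))
  refine ⟨x, fun n hn ↦ ?_⟩
  rcases le_total N n with h | h <;> obtain ⟨k, rfl⟩ := Nat.exists_eq_add_of_le' h
  · rw [iterate_add_apply, hx, iterate_apply_eq_of_semiconj_on hs he k hN, ← iterate_add_apply]
  · apply hφ.injective.iterate k
    rw [← iterate_add_apply, hx, iterate_apply_eq_of_semiconj_on hs he k hn, ← iterate_add_apply]

lemma exists_semiconj_eqOn {e : Y → X} {s : Set Y} (hφ : Bijective φ) (hs : MapsTo ψ s s)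
    (he : ∀ y ∈ s, φ (e y) = e (ψ y)) (habs : ∀ y, ∃ n, ψ^[n] y ∈ s) :
    ∃ Φ : Y → X, Semiconj Φ ψ φ ∧ EqOn Φ e s := by
  choose Φ hΦ using fun y ↦ exists_forall_iterate_eq_of_semiconj_on hφ hs he (habs y)
  refine ⟨Φ, fun y ↦ ?_, fun y hy ↦ hΦ y 0 hy⟩
  obtain ⟨n, hn⟩ := habs (ψ y)
  apply hφ.injective.iterate n
  rw [hΦ (ψ y) n hn, ← iterate_succ_apply, ← iterate_succ_apply, hΦ y (n + 1) hn]

variable {Φ : Y → X}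

lemma surjective_of_semiconj_of_absorbing (h : Semiconj Φ ψ φ) (hφ : Injective φ)
    (hψ : Surjective ψ) (habs : ∀ x, ∃ n, φ^[n] x ∈ range Φ) : Surjective Φ := by
  intro x
  obtain ⟨n, z, hz⟩ := habs x
  obtain ⟨y, rfl⟩ := hψ.iterate n z
  exact ⟨y, hφ.iterate n (((h.iterate_right n).eq y).symm.trans hz)⟩

lemma IsSimilarity.isometry_of_semiconj_of_absorbing [PseudoMetricSpace X] [PseudoMetricSpace Y]
    {c : ℝ} {s : Set Y} (hφ : IsSimilarity c φ) (hψ : IsSimilarity c ψ) (hc : c ≠ 0)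
    (h : Semiconj Φ ψ φ) (hΦ : ∀ x ∈ s, ∀ y ∈ s, dist (Φ x) (Φ y) = dist x y)
    (habs : ∀ y, ∀ᶠ n in atTop, ψ^[n] y ∈ s) : Isometry Φ := by
  refine Isometry.of_dist_eq fun x y ↦ ?_
  obtain ⟨n, hx, hy⟩ := ((habs x).and (habs y)).exists
  refine mul_left_cancel₀ (pow_ne_zero n hc) ?_
  calc c ^ n * dist (Φ x) (Φ y) = dist (φ^[n] (Φ x)) (φ^[n] (Φ y)) := (hφ.iterate n _ _).symm
    _ = dist (Φ (ψ^[n] x)) (Φ (ψ^[n] y)) := by rw [(h.iterate_right n).eq, (h.iterate_right n).eq]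
    _ = dist (ψ^[n] x) (ψ^[n] y) := hΦ _ hx _ hy
    _ = c ^ n * dist x y := hψ.iterate n x y

end Semiconj

theorem stmt_0_general {X Y : Type*} [MetricSpace X] [PseudoMetricSpace Y] {c : ℝ} (hc0 : 0 < c)
    (hc1 : c < 1) {φ : X → X} (hφ : IsSimilarity c φ) (hφ_surj : Surjective φ) {ψ : Y → Y}
    (hψ : IsSimilarity c ψ) (hψ_surj : Surjective ψ) {p : Y} (hp : IsFixedPt ψ p) {s : Set Y}
    (hs : s ∈ 𝓝 p) (hψs : MapsTo ψ s s) {e : Y → X}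
    (he : ∀ x ∈ s, ∀ y ∈ s, dist (e x) (e y) = dist x y) (he_image : e '' s ∈ 𝓝 (e p))
    (he_semiconj : ∀ y ∈ s, φ (e y) = e (ψ y)) :
    ∃ Φ : Y → X, Surjective Φ ∧ Isometry Φ ∧ EqOn Φ e s := by
  have hφ_inj : Injective φ := hφ.injective hc0.ne'
  have hq : IsFixedPt φ (e p) := by rw [IsFixedPt, he_semiconj p (mem_of_mem_nhds hs), hp.eq]
  have hψ_abs (y : Y) : ∀ᶠ n in atTop, ψ^[n] y ∈ s := hψ.tendsto_iterate hc0.le hc1 hp y hs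
  have hφ_abs (x : X) : ∀ᶠ n in atTop, φ^[n] x ∈ e '' s :=
    hφ.tendsto_iterate hc0.le hc1 hq x he_image
  obtain ⟨Φ, hΦ, hΦe⟩ :=
    exists_semiconj_eqOn ⟨hφ_inj, hφ_surj⟩ hψs he_semiconj fun y ↦ (hψ_abs y).exists
  have himage : e '' s ⊆ range Φ := hΦe.image_eq ▸ image_subset_range Φ s
  refine ⟨Φ, ?_, ?_, hΦe⟩
  · exact surjective_of_semiconj_of_absorbing hΦ hφ_inj hψ_surj fun x ↦
      (hφ_abs x).exists.imp fun _ hn ↦ himage hn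
  · refine hφ.isometry_of_semiconj_of_absorbing hψ hc0.ne' hΦ (fun x hx y hy ↦ ?_) hψ_abs
    rw [hΦe hx, hΦe hy, he x hx y hy]

/-- The metric-space core of the gluing construction: a local isometry from a ball of
Euclidean space, equivariant with respect to a contracting similarity, extends to a
global surjective isometry from Euclidean space. -/
theorem stmt_0 (m : ℕ) (X : Type*) [MetricSpace X]
    (lam ε : ℝ) (hlam0 : 0 < lam) (hlam1 : lam < 1) (hε : 0 < ε)
    (φ : X → X) (hφbij : Function.Bijective φ)
    (hφsim : ∀ x y : X, dist (φ x) (φ y) = lam * dist x y)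
    (e : EuclideanSpace ℝ (Fin m) → X)
    (he_iso : ∀ x y : EuclideanSpace ℝ (Fin m), ‖x‖ < ε → ‖y‖ < ε →
      dist (e x) (e y) = ‖x - y‖)
    (he_im : e '' {x : EuclideanSpace ℝ (Fin m) | ‖x‖ < ε} = Metric.ball (e 0) ε)
    (he_eq : ∀ x : EuclideanSpace ℝ (Fin m), ‖x‖ < ε → φ (e x) = e (lam • x)) :
    ∃ Φ : EuclideanSpace ℝ (Fin m) → X,
      Function.Surjective Φ ∧ Isometry Φ ∧
        ∀ x : EuclideanSpace ℝ (Fin m), ‖x‖ < ε → Φ x = e x := by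
  have hψ : IsSimilarity lam fun x : EuclideanSpace ℝ (Fin m) ↦ lam • x := fun x y ↦ by
    rw [dist_smul₀, Real.norm_of_nonneg hlam0.le]
  have hfix : IsFixedPt (fun x : EuclideanSpace ℝ (Fin m) ↦ lam • x) 0 := smul_zero lam
  simp only [← mem_ball_zero_iff, ofPred_mem_eq] at he_iso he_im he_eq ⊢
  exact stmt_0_general hlam0 hlam1 hφsim hφbij.surjective hψ (MulAction.surjective₀ hlam0.ne')
    hfix (ball_mem_nhds 0 hε) (hψ.mapsTo_ball hlam1.le hfix ε)
    (fun x hx y hy ↦ (he_iso x y hx hy).trans (dist_eq_norm x y).symm)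
    (he_im ▸ ball_mem_nhds (e 0) hε) he_eq
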